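/- Let (v,w) be an edge of 𝔅_n other than (s,s), and let the policy π for 𝔇_n be the twin policy of some weak unichain policy for 𝔅_n. Suppose the edge (x_{v,w}, y_{v,w}) is an improving switch for π; let π' be the policy obtained by applying (x_{v,w}, y_{v,w}) to π, and let π'' be the policy obtained by applying (v, x_{v,w}) to π'. Then z_π(x_{v,w}, y_{v,w}) = z_{π'}(v, x_{v,w}) = z_{π''}(π(v), v). -/

import Mathlib

/-! ## The Markov decision process `𝔅_n` -/

/-- Vertices of the MDP `𝔅_n`: a transportation vertex `t`, a sink `s`, a dummy vertex `d`,
and vertices `a i`, `b i` for `i ∈ {1,…,n}`. -/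
inductive BV : Type where
  | t : BV
  | s : BV
  | d : BV
  | a : ℕ → BV
  | b : ℕ → BV
deriving DecidableEq

/-- The vertex `a i` for `i ∈ {1,…,n+1}`, with the convention `a (n+1) = s`. -/
def aN (n i : ℕ) : BV := if i = n + 1 then BV.s else BV.a i

/-- The vertex `b i` for `i ∈ {1,…,n+1}`, with the convention `b (n+1) = d`. -/
def bN (n i : ℕ) : BV := if i = n + 1 then BV.d else BV.b i

/-- The vertex set of `𝔅_n`. -/
def IsBVertex (n : ℕ) : BV → Prop
  | BV.t => True
  | BV.s => True
  | BV.d => True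
  | BV.a i => 1 ≤ i ∧ i ≤ n
  | BV.b i => 1 ≤ i ∧ i ≤ n

/-- The edge relation of `𝔅_n`: travel, enter, skip, board, stay, leave edges,
the edge `(d,s)` and the self-loop `(s,s)`. -/
def BEdge (n : ℕ) (u v : BV) : Prop :=
  (∃ i, 1 ≤ i ∧ i ≤ n ∧ u = BV.t ∧ v = BV.a i) ∨
  (∃ i, 1 ≤ i ∧ i ≤ n ∧ u = BV.a i ∧ v = BV.b i) ∨
  (∃ i, 1 ≤ i ∧ i ≤ n ∧ u = BV.a i ∧ v = aN n (i + 1)) ∨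
  (∃ i, 1 ≤ i ∧ i ≤ n ∧ u = BV.a i ∧ v = BV.t) ∨
  (∃ i, 1 ≤ i ∧ i ≤ n ∧ u = BV.b i ∧ v = bN n (i + 1)) ∨
  (∃ i, 1 ≤ i ∧ i ≤ n ∧ u = BV.b i ∧ v = aN n (i + 1)) ∨
  (u = BV.d ∧ v = BV.s) ∨ (u = BV.s ∧ v = BV.s)

/-- The reward function of `𝔅_n`: `r(enter i) = 2^i`, `r(stay i) = 3/4`,
`r(board i) = -2^i + 5/4`, and reward `0` on all other edges. -/
def rB (n : ℕ) (u v : BV) : ℚ :=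
  match u, v with
  | BV.a i, BV.b j => if i = j then 2 ^ i else 0
  | BV.a i, BV.t => -(2 ^ i) + 5 / 4
  | BV.b i, BV.b j => if j = i + 1 then 3 / 4 else 0
  | BV.b i, BV.d => if i = n then 3 / 4 else 0
  | _, _ => 0

/-- A policy for `𝔅_n` chooses an outgoing edge at every vertex. -/
def IsBPolicy (n : ℕ) (π : BV → BV) : Prop := ∀ u, IsBVertex n u → BEdge n u (π u)

/-- A policy is weak unichain if it reaches the sink `s` from every vertex. -/
def BWeakUnichain (n : ℕ) (π : BV → BV) : Prop :=
  ∀ u, IsBVertex n u → ∃ k, π^[k] u = BV.s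

open Classical in
/-- The value of a vertex `v` w.r.t. a (weak unichain) policy `π`:
the sum of the rewards along the path that `π` takes from `v` to the sink `s`. -/
noncomputable def BVal (n : ℕ) (π : BV → BV) (v : BV) : ℚ :=
  if h : ∃ k, π^[k] v = BV.s then
    ∑ i ∈ Finset.range (Nat.find h), rB n (π^[i] v) (π^[i + 1] v)
  else 0

/-- The reduced costs of the edge `(u,v)` w.r.t. the policy `π`. -/
noncomputable def zB (n : ℕ) (π : BV → BV) (u v : BV) : ℚ :=
  rB n u v + BVal n π v - BVal n π u

/-- The edge `(u,v)` is an improving switch for `π` if its reduced costs are positive. -/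
def BImproving (n : ℕ) (π : BV → BV) (u v : BV) : Prop :=
  BEdge n u v ∧ 0 < zB n π u v

/-- The Bland numbering `𝒩_{𝔅_n}` of the edges of `𝔅_n`. -/
def NB (n : ℕ) (u v : BV) : ℕ :=
  match u, v with
  | BV.t, BV.a i => i
  | BV.a i, BV.b _ => n + 1 + 5 * (i - 1)
  | BV.a i, BV.a _ => n + 2 + 5 * (i - 1)
  | BV.a i, BV.s => n + 2 + 5 * (i - 1)
  | BV.a i, BV.t => n + 3 + 5 * (i - 1)
  | BV.b i, BV.b _ => n + 4 + 5 * (i - 1)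
  | BV.b i, BV.d => n + 4 + 5 * (i - 1)
  | BV.b i, BV.a _ => n + 5 + 5 * (i - 1)
  | BV.b i, BV.s => n + 5 + 5 * (i - 1)
  | BV.d, BV.s => 6 * n + 1
  | BV.s, BV.s => 6 * n + 2
  | _, _ => 0

/-- One step of Bland's policy iteration with edge numbering `N`:
apply the improving switch with the smallest number. -/
def IsBlandStep (n : ℕ) (N : BV → BV → ℕ) (π π' : BV → BV) : Prop :=
  ∃ u v, BImproving n π u v ∧ (∀ u' v', BImproving n π u' v' → N u v ≤ N u' v') ∧
    π' = Function.update π u v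

/-- `BlandReaches n N π ψ` says that Bland's policy iteration started at `π` visits `ψ`. -/
def BlandReaches (n : ℕ) (N : BV → BV → ℕ) : (BV → BV) → (BV → BV) → Prop :=
  Relation.ReflTransGen (IsBlandStep n N)

/-- The canonical policy `π_0` for `0`: `travel 1`, `skip i` and `leave i` are active. -/
def pi0 (n : ℕ) : BV → BV := fun u =>
  match u with
  | BV.t => BV.a 1
  | BV.a i => aN n (i + 1)
  | BV.b i => aN n (i + 1)
  | BV.d => BV.s
  | BV.s => BV.s

/-- The optimal policy `π_*`: `travel 1`, `enter i` for all `i`, `leave j` for `j < n`,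
and `stay n` are active. -/
def piStar (n : ℕ) : BV → BV := fun u =>
  match u with
  | BV.t => BV.a 1
  | BV.a i => BV.b i
  | BV.b i => if i = n then BV.d else BV.a (i + 1)
  | BV.d => BV.s
  | BV.s => BV.s

/-! ## Bits and canonical policies -/

/-- The least significant set bit `ℓ_1(x)` (1-based). -/
noncomputable def lsb (x : ℕ) : ℕ := sInf {i | 1 ≤ i ∧ Nat.testBit x (i - 1)}

/-- The most significant set bit `m(x)` (1-based). -/
noncomputable def msb1 (x : ℕ) : ℕ := sSup {i | 1 ≤ i ∧ Nat.testBit x (i - 1)}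

/-- The least unset bit `ℓ_0(x)` (1-based). -/
noncomputable def lzero (x : ℕ) : ℕ := sInf {i | 1 ≤ i ∧ ¬ Nat.testBit x (i - 1)}

/-- `L_i(x) = max { j ≤ i-2 | x_j = 1 or j = 1 }` (1-based bits). -/
noncomputable def Lfun (i x : ℕ) : ℕ :=
  sSup {j | 1 ≤ j ∧ j ≤ i - 2 ∧ (Nat.testBit x (j - 1) ∨ j = 1)}

/-- `IsCanonical n x π` says that `π` is the canonical policy `π_x` for `x`. -/
noncomputable def IsCanonical (n x : ℕ) (π : BV → BV) : Prop :=
  IsBPolicy n π ∧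
  if x = 0 then
    π BV.t = BV.a 1 ∧
      ∀ i, 1 ≤ i → i ≤ n → π (BV.a i) = aN n (i + 1) ∧ π (BV.b i) = aN n (i + 1)
  else
    π BV.t = BV.a (lsb x) ∧
    π (BV.b (msb1 x)) = aN n (msb1 x + 1) ∧
    (∀ i, msb1 x < i → i ≤ n → π (BV.a i) = aN n (i + 1) ∧ π (BV.b i) = aN n (i + 1)) ∧
    ∀ i, 1 ≤ i → i ≤ n → Nat.testBit x (i - 1) →
      π (BV.a i) = BV.b i ∧
      (i = 2 → π (BV.b 1) = BV.a 2 ∧ (¬ Nat.testBit x 0 → π (BV.a 1) = BV.a 2)) ∧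
      (3 ≤ i → Nat.testBit x (i - 2) → π (BV.b (i - 1)) = BV.a i) ∧
      (3 ≤ i → ¬ Nat.testBit x (i - 2) →
        π (BV.b (i - 1)) = BV.b i ∧ π (BV.a (i - 1)) = BV.a i ∧
        π (BV.b (i - 2)) = BV.a (i - 1) ∧
        (Lfun i x < i - 2 →
          ∀ j, Lfun i x + 1 ≤ j → j ≤ i - 2 →
            π (BV.a j) = BV.t ∧ π (BV.b (j - 1)) = BV.b j) ∧
        (Lfun i x = 1 → ¬ Nat.testBit x 0 → π (BV.a 1) = BV.t))

/-- Activating a list of edges in a policy, from left to right. -/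
def activateList (π : BV → BV) (L : List (BV × BV)) : BV → BV :=
  L.foldl (fun σ e => Function.update σ e.1 e.2) π

/-- The canonical phases w.r.t. an odd number `x` (with `ℓ := ℓ_0(x)`), as a list of edges
to be activated in order. -/
noncomputable def phaseList (n x : ℕ) : List (BV × BV) :=
  let ℓ := lzero x
  (if Nat.testBit x ℓ then [(BV.b ℓ, aN n (ℓ + 1))] else []) ++
  (if Nat.testBit x ℓ ∨ msb1 x < ℓ then [(BV.b (ℓ - 1), BV.b ℓ)] else []) ++
  [(BV.a ℓ, BV.b ℓ), (BV.t, BV.a ℓ)] ++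
  ((List.range (ℓ - 2)).map fun j => (BV.a (j + 1), BV.t)) ++
  [(BV.a (ℓ - 1), BV.a ℓ)] ++
  (((List.range (ℓ - 3)).reverse).map fun j => (BV.b (j + 1), BV.b (j + 2))) ++
  (if ℓ = 2 then [(BV.b 1, BV.a 2)] else [])

/-! ## The Markov decision process `𝔇_n` -/

/-- Vertices of `𝔇_n`: the original vertices (`base`), and for every edge `(v,w)` of `𝔅_n`
other than the self-loop, the gadget vertices `x v w`, `y v w`, `z v w`. -/
inductive DV : Type where
  | base : BV → DV
  | x : BV → BV → DV
  | y : BV → BV → DV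
  | z : BV → BV → DV
deriving DecidableEq

/-- The edges of `𝔅_n` that get replaced by gadgets (all edges except the self-loop `(s,s)`). -/
def DEdgePair (n : ℕ) (v w : BV) : Prop := BEdge n v w ∧ v ≠ BV.s

/-- The vertex set of `𝔇_n`. -/
def IsDVertex (n : ℕ) : DV → Prop
  | DV.base v => IsBVertex n v
  | DV.x v w => DEdgePair n v w
  | DV.y v w => DEdgePair n v w
  | DV.z v w => DEdgePair n v w

/-- The agent vertices of `𝔇_n` (all vertices except the randomization vertices `y v w`). -/
def IsDAgent (n : ℕ) : DV → Prop
  | DV.base v => IsBVertex n v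
  | DV.x v w => DEdgePair n v w
  | DV.y _ _ => False
  | DV.z v w => DEdgePair n v w

/-- The agent edges of `𝔇_n`. -/
def DEdge (n : ℕ) (u u' : DV) : Prop :=
  (∃ v w, DEdgePair n v w ∧
    ((u = DV.base v ∧ u' = DV.x v w) ∨ (u = DV.x v w ∧ u' = DV.base v) ∨
     (u = DV.x v w ∧ u' = DV.y v w) ∨ (u = DV.z v w ∧ u' = DV.base w))) ∨
  (u = DV.base BV.s ∧ u' = DV.base BV.s)

/-- The reward function of `𝔇_n`: the edge `(z v w, w)` carries the reward of the original
edge `(v,w)`; all other agent edges have reward `0`. -/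
def rD (n : ℕ) (u u' : DV) : ℚ :=
  match u, u' with
  | DV.z v w, DV.base w' => if w' = w then rB n v w else 0
  | _, _ => 0

/-- A policy for `𝔇_n` chooses an outgoing agent edge at every agent vertex. -/
def IsDPolicy (n : ℕ) (π : DV → DV) : Prop := ∀ u, IsDAgent n u → DEdge n u (π u)

/-- `IsDVal n p π V` says that `V` satisfies the Bellman equations characterizing the value
function of the policy `π` for `𝔇_n` with probabilities `p`, with `V s = 0`. -/
def IsDVal (n : ℕ) (p : BV → ℚ) (π : DV → DV) (V : DV → ℚ) : Prop :=
  V (DV.base BV.s) = 0 ∧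
  (∀ u, IsDAgent n u → V u = rD n u (π u) + V (π u)) ∧
  (∀ v w, DEdgePair n v w →
    V (DV.y v w) = p v * V (DV.z v w) + (1 - p v) * V (DV.base v))

open Classical in
/-- The value function of a (weak unichain) policy `π` for `𝔇_n`: the unique solution of the
Bellman equations (normalized to `0` outside the vertex set). -/
noncomputable def DVal (n : ℕ) (p : BV → ℚ) (π : DV → DV) : DV → ℚ :=
  if h : ∃! V : DV → ℚ, IsDVal n p π V ∧ ∀ u, ¬ IsDVertex n u → V u = 0 then
    h.exists.choose
  else fun _ => 0

/-- The reduced costs of an agent edge `(u,u')` of `𝔇_n` w.r.t. the policy `π`. -/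
noncomputable def zD (n : ℕ) (p : BV → ℚ) (π : DV → DV) (u u' : DV) : ℚ :=
  rD n u u' + DVal n p π u' - DVal n p π u

/-- An agent edge of `𝔇_n` is an improving switch if its reduced costs are positive. -/
def DImproving (n : ℕ) (p : BV → ℚ) (π : DV → DV) (u u' : DV) : Prop :=
  DEdge n u u' ∧ 0 < zD n p π u u'

/-- One (agent or positive-probability randomization) step of the process `𝔇_n` under `π`. -/
def DStep (n : ℕ) (p : BV → ℚ) (π : DV → DV) (u u' : DV) : Prop :=
  (IsDAgent n u ∧ u' = π u) ∨
  (∃ v w, DEdgePair n v w ∧ u = DV.y v w ∧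
    ((u' = DV.z v w ∧ 0 < p v) ∨ (u' = DV.base v ∧ 0 < 1 - p v)))

/-- A policy for `𝔇_n` is weak unichain if it reaches `s` with probability one from every
vertex, i.e. `s` is reachable via active/positive-probability steps from every vertex. -/
def DWeakUnichain (n : ℕ) (p : BV → ℚ) (π : DV → DV) : Prop :=
  ∀ u, IsDVertex n u → Relation.ReflTransGen (DStep n p π) u (DV.base BV.s)

/-- The twin policy of a policy `π` for `𝔅_n`: every vertex `v ≠ s` is `π v`-oriented. -/
def twin (π : BV → BV) : DV → DV := fun u =>
  match u with
  | DV.base v => if v = BV.s then DV.base BV.s else DV.x v (π v)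
  | DV.x v w => if w = π v then DV.y v w else DV.base v
  | DV.y v w => DV.y v w
  | DV.z _ w => DV.base w

/-- The vertex numbering `𝒩_V` of `𝔅_n`: the order `(t, a 1, b 1, a 2, b 2, …, a n, b n, d, s)`. -/
def NV (n : ℕ) : BV → ℕ
  | BV.t => 1
  | BV.a i => 2 * i
  | BV.b i => 2 * i + 1
  | BV.d => 2 * n + 2
  | BV.s => 2 * n + 3

/-- The specific probabilities `p_v = 2^{-𝒩_V(v)·(n+5)}`. -/
noncomputable def pSpec (n : ℕ) (v : BV) : ℚ := (2 : ℚ) ^ (-((NV n v * (n + 5) : ℕ) : ℤ))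

/-- The set `B(v)` of agent edges of `𝔇_n` belonging to the vertex `v`. -/
def Belongs (n : ℕ) (v : BV) (e : DV × DV) : Prop :=
  ∃ w, DEdgePair n v w ∧
    (e = (DV.x v w, DV.y v w) ∨ e = (DV.base v, DV.x v w) ∨ e = (DV.x v w, DV.base v))

/-- Applying the improving switch `e` to the policy `π` yields `π'`. -/
def DApply (n : ℕ) (p : BV → ℚ) (π : DV → DV) (e : DV × DV) (π' : DV → DV) : Prop :=
  DImproving n p π e.1 e.2 ∧ π' = Function.update π e.1 e.2

/-- One step of Bland's policy iteration on `𝔇_n` with edge numbering `N`. -/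
def IsBlandStepD (n : ℕ) (p : BV → ℚ) (N : DV → DV → ℕ) (π π' : DV → DV) : Prop :=
  ∃ u u', DImproving n p π u u' ∧ (∀ a b, DImproving n p π a b → N u u' ≤ N a b) ∧
    π' = Function.update π u u'

/-- One step of Dantzig's policy iteration on `𝔇_n`: apply an improving switch of maximal
reduced costs. -/
def DantzigStep (n : ℕ) (p : BV → ℚ) (π π' : DV → DV) : Prop :=
  ∃ u u', DImproving n p π u u' ∧
    (∀ a b, DImproving n p π a b → zD n p π a b ≤ zD n p π u u') ∧
    π' = Function.update π u u'

/-- The finite set of vertices of `𝔅_n`, as a `Finset`. -/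
noncomputable def BVSet (n : ℕ) : Finset BV :=
  {BV.t, BV.d, BV.s} ∪ (Finset.Icc 1 n).image BV.a ∪ (Finset.Icc 1 n).image BV.b

/-- The finite set of agent vertices of `𝔇_n`, as a `Finset`. -/
noncomputable def DAgentSet (n : ℕ) : Finset DV := by
  classical
  exact ((BVSet n).image DV.base) ∪
    (((BVSet n ×ˢ BVSet n).filter fun e => DEdgePair n e.1 e.2).image fun e => DV.x e.1 e.2) ∪
    (((BVSet n ×ˢ BVSet n).filter fun e => DEdgePair n e.1 e.2).image fun e => DV.z e.1 e.2)

/-- The objective of the Largest Increase rule: the sum of the values of all agent vertices. -/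
noncomputable def LIobj (n : ℕ) (p : BV → ℚ) (π : DV → DV) : ℚ :=
  ∑ u ∈ DAgentSet n, DVal n p π u

/-- One step of the Largest Increase policy iteration on `𝔇_n`: apply an improving switch
maximizing the sum of all agent vertex values of the resulting policy. -/
def LIStep (n : ℕ) (p : BV → ℚ) (π π' : DV → DV) : Prop :=
  ∃ u u', DImproving n p π u u' ∧
    (∀ a b, DImproving n p π a b →
      LIobj n p (Function.update π a b) ≤ LIobj n p (Function.update π u u')) ∧
    π' = Function.update π u u'

/-- `N` is a Bland numbering `𝒩_{𝔇_n}` for `𝔇_n`: it is injective on agent edges, the edges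
`(x v w, v)` all come first, within each gadget `(x v w, y v w)` precedes `(v, x v w)`,
the gadget blocks are ordered according to `𝒩_{𝔅_n}`, and the self-loop comes last. -/
def IsDBlandNumbering (n : ℕ) (N : DV → DV → ℕ) : Prop :=
  (∀ u₁ u₂ u₁' u₂', DEdge n u₁ u₂ → DEdge n u₁' u₂' → N u₁ u₂ = N u₁' u₂' →
    u₁ = u₁' ∧ u₂ = u₂') ∧
  (∀ v w v' w', DEdgePair n v w → DEdgePair n v' w' →
    N (DV.x v w) (DV.base v) < N (DV.x v' w') (DV.y v' w')) ∧
  (∀ v w, DEdgePair n v w → N (DV.x v w) (DV.y v w) < N (DV.base v) (DV.x v w)) ∧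
  (∀ v w v' w', DEdgePair n v w → DEdgePair n v' w' → NB n v w < NB n v' w' →
    N (DV.base v) (DV.x v w) < N (DV.x v' w') (DV.y v' w')) ∧
  (∀ v w, DEdgePair n v w → N (DV.base v) (DV.x v w) < N (DV.base BV.s) (DV.base BV.s))

/-! ## Auxiliary facts on `𝔅_n` -/

lemma BEdge.right_vertex {n : ℕ} {u w : BV} (h : BEdge n u w) : IsBVertex n w := by
  rcases h with ⟨i, h1, h2, -, rfl⟩ | ⟨i, h1, h2, -, rfl⟩ | ⟨i, h1, h2, -, rfl⟩ |
    ⟨i, h1, h2, -, rfl⟩ | ⟨i, h1, h2, -, rfl⟩ | ⟨i, h1, h2, -, rfl⟩ | ⟨-, rfl⟩ | ⟨-, rfl⟩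
  all_goals (try unfold aN); (try unfold bN); (try split_ifs)
  all_goals simp only [IsBVertex]
  all_goals omega

lemma BEdge.left_vertex {n : ℕ} {u w : BV} (h : BEdge n u w) : IsBVertex n u := by
  rcases h with ⟨i, h1, h2, rfl, -⟩ | ⟨i, h1, h2, rfl, -⟩ | ⟨i, h1, h2, rfl, -⟩ |
    ⟨i, h1, h2, rfl, -⟩ | ⟨i, h1, h2, rfl, -⟩ | ⟨i, h1, h2, rfl, -⟩ | ⟨rfl, -⟩ | ⟨rfl, -⟩
  all_goals simp only [IsBVertex]
  all_goals omega

lemma BEdge.from_s {n : ℕ} {w : BV} (h : BEdge n BV.s w) : w = BV.s := by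
  simpa [BEdge] using h

/-- A potential dominating all rewards; hence no cycle of `𝔅_n` has positive reward. -/
def potB (n : ℕ) : BV → ℚ
  | BV.t => 3 / 2
  | BV.s => 2 ^ (n + 2)
  | BV.d => 2 ^ (n + 2)
  | BV.a i => 2 ^ i
  | BV.b i => 2 ^ (i + 1)

lemma rB_le_potB {n : ℕ} {u w : BV} (h : BEdge n u w) : rB n u w ≤ potB n w - potB n u := by
  have key : ∀ i : ℕ, 1 ≤ i → (2 : ℚ) ≤ 2 ^ i := fun i hi => by
    calc (2 : ℚ) = 2 ^ 1 := by norm_num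
      _ ≤ 2 ^ i := pow_le_pow_right₀ (by norm_num) hi
  rcases h with ⟨i, h1, h2, rfl, rfl⟩ | ⟨i, h1, h2, rfl, rfl⟩ | ⟨i, h1, h2, rfl, rfl⟩ |
    ⟨i, h1, h2, rfl, rfl⟩ | ⟨i, h1, h2, rfl, rfl⟩ | ⟨i, h1, h2, rfl, rfl⟩ | ⟨rfl, rfl⟩ |
    ⟨rfl, rfl⟩
  all_goals (try have hk := key i h1)
  all_goals (try unfold aN); (try unfold bN); (try split_ifs with hin)
  all_goals (try have hin' : i = n := by omega)
  all_goals (try subst hin')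
  all_goals simp [rB, potB, pow_succ]
  all_goals linarith

lemma BVal_s (n : ℕ) (π : BV → BV) : BVal n π BV.s = 0 := by
  have h : ∃ k, π^[k] BV.s = BV.s := ⟨0, rfl⟩
  have h0 : Nat.find h = 0 := (Nat.find_eq_zero h).2 rfl
  unfold BVal
  rw [dif_pos h]
  apply Finset.sum_eq_zero
  intro i hi
  rw [Finset.mem_range] at hi
  have h1 : Nat.find h ≤ 0 := Nat.find_min' h rfl
  exfalso
  have : i < Nat.find h := by convert hi
  omega

lemma BVal_step (n : ℕ) (π : BV → BV) (u : BV) (hu : u ≠ BV.s) (h : ∃ k, π^[k] u = BV.s) :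
    BVal n π u = rB n u (π u) + BVal n π (π u) := by
  classical
  have h' : ∃ k, π^[k] (π u) = BV.s := by
    obtain ⟨k, hk⟩ := h
    cases k with
    | zero => exact absurd hk hu
    | succ k => exact ⟨k, hk⟩
  have hf : Nat.find h = Nat.find h' + 1 := Nat.find_comp_succ h h' (by simpa using hu)
  unfold BVal
  rw [dif_pos h, dif_pos h']
  have e1 : ∀ k, (∑ i ∈ Finset.range (k + 1), rB n (π^[i] u) (π^[i + 1] u)) =
      rB n u (π u) + ∑ i ∈ Finset.range k, rB n (π^[i] (π u)) (π^[i + 1] (π u)) := by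
    intro k
    rw [Finset.sum_range_succ', add_comm]
    rfl
  rw [← e1]
  congr 2

lemma IsBPolicy.iterate_vertex {n : ℕ} {π : BV → BV} (h : IsBPolicy n π) {u : BV}
    (hu : IsBVertex n u) (j : ℕ) : IsBVertex n (π^[j] u) := by
  induction j generalizing u with
  | zero => exact hu
  | succ j ih => exact ih (h u hu).right_vertex

lemma pot_mono {n : ℕ} {π : BV → BV} (h : IsBPolicy n π) (hw : BWeakUnichain n π) {u : BV}
    (hu : IsBVertex n u) (j : ℕ) :
    BVal n π u + potB n u ≤ BVal n π (π^[j] u) + potB n (π^[j] u) := by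
  induction j generalizing u with
  | zero => exact le_rfl
  | succ j ih =>
    refine le_trans ?_ (ih (h u hu).right_vertex)
    by_cases hs : u = BV.s
    · subst hs
      rw [(h _ hu).from_s]
    · rw [BVal_step n π u hs (hw u hu)]
      linarith [rB_le_potB (h u hu)]

lemma iterate_update_avoid (π : BV → BV) (v w u : BV) (h : ∀ j, π^[j] u ≠ v) (j : ℕ) :
    (Function.update π v w)^[j] u = π^[j] u := by
  induction j with
  | zero => rfl
  | succ j ih =>
    rw [Function.iterate_succ_apply', Function.iterate_succ_apply', ih,
      Function.update_of_ne (h j)]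

lemma BVal_update_avoid (n : ℕ) (π : BV → BV) (v w : BV) (k : ℕ) (u : BV)
    (hk : π^[k] u = BV.s) (h : ∀ j, π^[j] u ≠ v) :
    BVal n (Function.update π v w) u = BVal n π u := by
  induction k generalizing u with
  | zero =>
    have : u = BV.s := hk
    rw [this, BVal_s, BVal_s]
  | succ k ih =>
    by_cases hs : u = BV.s
    · rw [hs, BVal_s, BVal_s]
    · rw [BVal_step n π u hs ⟨_, hk⟩, BVal_step n _ u hs
        ⟨k + 1, by rw [iterate_update_avoid π v w u h, hk]⟩,
        Function.update_of_ne (show u ≠ v from h 0), ih (π u) hk (fun j => h (j + 1))]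

/-- The value function of a policy for `𝔇_n` in which `σ` is followed. -/
lemma DVal_spec (n : ℕ) (p : BV → ℚ)
    (hp : ∀ v, IsBVertex n v → v ≠ BV.s → 0 < p v ∧ p v ≤ 1)
    (σ : BV → BV) (hσ : IsBPolicy n σ) (hwu : BWeakUnichain n σ) (P : DV → DV)
    (hs : P (DV.base BV.s) = DV.base BV.s)
    (hb : ∀ u, u ≠ BV.s → P (DV.base u) = DV.x u (σ u))
    (hx : ∀ u, P (DV.x u (σ u)) = DV.y u (σ u))
    (hx' : ∀ u w, P (DV.x u w) = DV.y u w ∨ P (DV.x u w) = DV.base u)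
    (hz : ∀ u w, P (DV.z u w) = DV.base w) :
    IsDVal n p P (DVal n p P) ∧ ∀ u, IsBVertex n u → DVal n p P (DV.base u) = BVal n σ u := by
  classical
  -- every solution agrees with `BVal` on the original vertices
  have base : ∀ V, IsDVal n p P V → ∀ u, IsBVertex n u → V (DV.base u) = BVal n σ u := by
    intro V hV u hu
    obtain ⟨k, hk⟩ := hwu u hu
    induction k generalizing u with
    | zero =>
      have : u = BV.s := hk
      rw [this, BVal_s, hV.1]
    | succ k ih =>
      by_cases hus : u = BV.s
      · rw [hus, BVal_s, hV.1]
      · have hE : DEdgePair n u (σ u) := ⟨hσ u hu, hus⟩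
        have h1 := hV.2.1 (DV.base u) hu
        have h2 := hV.2.1 (DV.x u (σ u)) hE
        have h3 := hV.2.1 (DV.z u (σ u)) hE
        have h4 := hV.2.2 u (σ u) hE
        have h5 := ih (σ u) (hσ u hu).right_vertex hk
        rw [hb u hus] at h1
        rw [hx] at h2
        rw [hz] at h3
        simp only [rD, if_true, zero_add] at h1 h2 h3
        rw [BVal_step n σ u hus ⟨_, hk⟩, ← h5, ← h3]
        have hpp := (hp u hu hus).1
        apply mul_left_cancel₀ hpp.ne'
        rw [← h2, ← h1] at h4
        linarith
  let W : DV → ℚ := fun u => match u with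
    | DV.base u => BVal n σ u
    | DV.z u w => rB n u w + BVal n σ w
    | DV.y u w => p u * (rB n u w + BVal n σ w) + (1 - p u) * BVal n σ u
    | DV.x u w => if P (DV.x u w) = DV.y u w then
        p u * (rB n u w + BVal n σ w) + (1 - p u) * BVal n σ u else BVal n σ u
  let W' : DV → ℚ := fun u => if IsDVertex n u then W u else 0
  have hW' : ∀ u, IsDVertex n u → W' u = W u := fun u hu => if_pos hu
  have hWval : IsDVal n p P W' := by
    refine ⟨?_, ?_, ?_⟩
    · rw [hW' (DV.base BV.s) trivial]
      exact BVal_s n σ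
    · intro u hu
      match u, hu with
      | DV.base u, hu =>
        by_cases hus : u = BV.s
        · subst hus
          rw [hs]
          simp [rD]
        · have hE : DEdgePair n u (σ u) := ⟨hσ u hu, hus⟩
          rw [hb u hus, hW' (DV.base u) hu, hW' (DV.x u (σ u)) hE]
          simp only [W, rD, hx, if_true]
          rw [← BVal_step n σ u hus (hwu u hu)]
          ring
      | DV.x u w, hu =>
        have hE : DEdgePair n u w := hu
        rcases hx' u w with h | h
        · rw [h, hW' (DV.x u w) hE, hW' (DV.y u w) hE]
          simp only [W, rD, h, if_true, zero_add]
        · rw [h, hW' (DV.x u w) hE, hW' (DV.base u) hE.1.left_vertex]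
          simp [W, rD, h]
      | DV.z u w, hu =>
        have hE : DEdgePair n u w := hu
        rw [hz, hW' (DV.z u w) hE, hW' (DV.base w) hE.1.right_vertex]
        simp [W, rD]
    · intro u w hE
      rw [hW' (DV.y u w) hE, hW' (DV.z u w) hE, hW' (DV.base u) hE.1.left_vertex]
  have hex : ∃! V : DV → ℚ, IsDVal n p P V ∧ ∀ u, ¬ IsDVertex n u → V u = 0 := by
    refine ⟨W', ⟨hWval, fun u hu => if_neg hu⟩, ?_⟩
    rintro V ⟨hV, hV0⟩
    have eb : ∀ u, IsBVertex n u → V (DV.base u) = W' (DV.base u) := fun u hu => by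
      rw [base V hV u hu, base W' hWval u hu]
    have ez : ∀ u w, DEdgePair n u w → V (DV.z u w) = W' (DV.z u w) := fun u w hE => by
      rw [hV.2.1 (DV.z u w) hE, hWval.2.1 (DV.z u w) hE, hz, eb w hE.1.right_vertex]
    have ey : ∀ u w, DEdgePair n u w → V (DV.y u w) = W' (DV.y u w) := fun u w hE => by
      rw [hV.2.2 u w hE, hWval.2.2 u w hE, ez u w hE, eb u hE.1.left_vertex]
    have ex : ∀ u w, DEdgePair n u w → V (DV.x u w) = W' (DV.x u w) := fun u w hE => by
      rw [hV.2.1 (DV.x u w) hE, hWval.2.1 (DV.x u w) hE]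
      rcases hx' u w with h | h
      · rw [h, ey u w hE]
      · rw [h, eb u hE.1.left_vertex]
    funext u
    by_cases hu : IsDVertex n u
    · match u, hu with
      | DV.base u, hu => exact eb u hu
      | DV.x u w, hu => exact ex u w hu
      | DV.y u w, hu => exact ey u w hu
      | DV.z u w, hu => exact ez u w hu
    · rw [hV0 u hu]
      exact (if_neg hu).symm
  have hD : IsDVal n p P (DVal n p P) := by
    unfold DVal
    rw [dif_pos hex]
    exact hex.exists.choose_spec.1
  exact ⟨hD, base _ hD⟩

/-- Consecutive reduced costs in a gadget: if `(x v w, y v w)` is improving for the twin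
policy `π` of a weak unichain policy for `𝔅_n`, and `π'`, `π''` result from applying
`(x v w, y v w)` and then `(v, x v w)`, then
`z_π(x v w, y v w) = z_{π'}(v, x v w) = z_{π''}(π(v), v)`. -/
theorem stmt13 (n : ℕ) (hn : 1 ≤ n) (p : BV → ℚ)
    (hp : ∀ v, IsBVertex n v → v ≠ BV.s → 0 < p v ∧ p v ≤ 1)
    (πB : BV → BV) (hπB : IsBPolicy n πB) (hwu : BWeakUnichain n πB)
    (v w : BV) (hvw : DEdgePair n v w)
    (himp : DImproving n p (twin πB) (DV.x v w) (DV.y v w)) :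
    zD n p (twin πB) (DV.x v w) (DV.y v w) =
      zD n p (Function.update (twin πB) (DV.x v w) (DV.y v w)) (DV.base v) (DV.x v w) ∧
    zD n p (Function.update (twin πB) (DV.x v w) (DV.y v w)) (DV.base v) (DV.x v w) =
      zD n p (Function.update (Function.update (twin πB) (DV.x v w) (DV.y v w))
          (DV.base v) (DV.x v w))
        (twin πB (DV.base v)) (DV.base v) := by
  obtain ⟨hE, hvs⟩ := hvw
  have hvV : IsBVertex n v := hE.left_vertex
  have hwV : IsBVertex n w := hE.right_vertex
  have hpE : DEdgePair n v (πB v) := ⟨hπB v hvV, hvs⟩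
  have hσV : IsBVertex n (πB v) := hpE.1.right_vertex
  obtain ⟨hD0, hb0⟩ := DVal_spec n p hp πB hπB hwu (twin πB) (by simp [twin])
    (fun u hu => by simp [twin, hu]) (fun u => by simp [twin])
    (fun u w => by by_cases h : w = πB u <;> simp [twin, h]) (fun u w => by simp [twin])
  have hpos := himp.2
  have y0 := hD0.2.2 v w ⟨hE, hvs⟩
  have z0 := hD0.2.1 (DV.z v w) ⟨hE, hvs⟩
  have x0 := hD0.2.1 (DV.x v w) ⟨hE, hvs⟩
  have hne : w ≠ πB v := by
    intro h
    have h1 : twin πB (DV.x v w) = DV.y v w := by simp [twin, h]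
    rw [h1] at x0
    simp only [zD, rD] at hpos x0
    linarith
  have htx : twin πB (DV.x v w) = DV.base v := by simp [twin, hne]
  have htz : ∀ u w', twin πB (DV.z u w') = DV.base w' := fun u w' => rfl
  have htb : twin πB (DV.base v) = DV.x v (πB v) := by simp [twin, hvs]
  rw [htx] at x0
  rw [htz] at z0
  simp only [rD, if_true, zero_add] at x0 z0
  have hz0 : zD n p (twin πB) (DV.x v w) (DV.y v w) =
      p v * (rB n v w + BVal n πB w - BVal n πB v) := by
    simp only [zD, rD]
    rw [x0, y0, z0, hb0 v hvV, hb0 w hwV]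
    ring
  have hgain : 0 < rB n v w + BVal n πB w - BVal n πB v := by
    rw [hz0] at hpos
    exact pos_of_mul_pos_right hpos (hp v hvV hvs).1.le
  -- the first switch
  set P1 := Function.update (twin πB) (DV.x v w) (DV.y v w) with hP1
  obtain ⟨hD1, hb1⟩ := DVal_spec n p hp πB hπB hwu P1 (by simp [P1, twin])
    (fun u hu => by simp [P1, twin, hu])
    (fun u => by
      rw [hP1, Function.update_of_ne]
      · simp [twin]
      · intro h
        injection h with h1 h2
        subst h1
        exact hne h2.symm)
    (fun u w' => by
      by_cases h0 : DV.x u w' = DV.x v w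
      · left
        injection h0 with h1 h2
        subst h1 h2
        simp [P1]
      · rw [hP1, Function.update_of_ne h0]
        by_cases h : w' = πB u <;> simp [twin, h])
    (fun u w' => by simp [P1, twin])
  have y1 := hD1.2.2 v w ⟨hE, hvs⟩
  have z1 := hD1.2.1 (DV.z v w) ⟨hE, hvs⟩
  have x1 := hD1.2.1 (DV.x v w) ⟨hE, hvs⟩
  rw [show P1 (DV.x v w) = DV.y v w by simp [P1]] at x1
  rw [show P1 (DV.z v w) = DV.base w by simp [P1, twin]] at z1
  simp only [rD, if_true, zero_add] at x1 z1
  have hz1 : zD n p P1 (DV.base v) (DV.x v w) =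
      p v * (rB n v w + BVal n πB w - BVal n πB v) := by
    simp only [zD, rD]
    rw [x1, y1, z1, hb1 v hvV, hb1 w hwV]
    ring
  -- the second switch
  have hss : πB BV.s = BV.s := (hπB BV.s trivial).from_s
  have av1 : ∀ j, πB^[j] w ≠ v := by
    intro j hj
    have h1 := pot_mono hπB hwu hwV j
    rw [hj] at h1
    linarith [rB_le_potB hE]
  have av2 : ∀ j, πB^[j] (πB v) ≠ v := by
    intro j hj
    obtain ⟨k, hk⟩ := hwu v hvV
    have hper : Function.IsPeriodicPt πB (j + 1) v := hj
    have h1 : πB^[k * (j + 1)] v = v := hper.const_mul k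
    rw [Nat.mul_succ, Function.iterate_add_apply, hk, Function.iterate_fixed hss] at h1
    exact hvs h1.symm
  set σ := Function.update πB v w with hσdef
  have hσP : IsBPolicy n σ := by
    intro u hu
    by_cases h : u = v
    · subst h
      simpa [σ] using hE
    · rw [hσdef, Function.update_of_ne h]
      exact hπB u hu
  obtain ⟨kw, hkw⟩ := hwu w hwV
  obtain ⟨kp, hkp⟩ := hwu (πB v) hσV
  have hσw : BWeakUnichain n σ := by
    intro u hu
    obtain ⟨k, hk⟩ := hwu u hu
    induction k generalizing u with
    | zero => exact ⟨0, hk⟩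
    | succ k ih =>
      by_cases h : u = v
      · refine ⟨kw + 1, ?_⟩
        rw [Function.iterate_succ_apply, h, hσdef, Function.update_self,
          iterate_update_avoid πB v w w av1, hkw]
      · obtain ⟨m, hm⟩ := ih (πB u) (hπB u hu).right_vertex hk
        refine ⟨m + 1, ?_⟩
        rw [Function.iterate_succ_apply, hσdef, Function.update_of_ne h]
        exact hm
  have bw : BVal n σ w = BVal n πB w := BVal_update_avoid n πB v w kw w hkw av1
  have bp : BVal n σ (πB v) = BVal n πB (πB v) :=
    BVal_update_avoid n πB v w kp (πB v) hkp av2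
  have bv : BVal n σ v = rB n v w + BVal n πB w := by
    rw [BVal_step n σ v hvs (hσw v hvV), show σ v = w by simp [σ], bw]
  have bv0 : BVal n πB v = rB n v (πB v) + BVal n πB (πB v) :=
    BVal_step n πB v hvs (hwu v hvV)
  set P2 := Function.update P1 (DV.base v) (DV.x v w) with hP2
  have hP2x : ∀ u w', P2 (DV.x u w') = P1 (DV.x u w') := fun u w' => by simp [P2]
  obtain ⟨hD2, hb2⟩ := DVal_spec n p hp σ hσP hσw P2
    (by
      have : DV.base BV.s ≠ DV.base v := fun h => by
        injection h with h
        exact hvs h.symm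
      rw [hP2, Function.update_of_ne this]
      simp [P1, twin])
    (fun u hu => by
      by_cases h : u = v
      · subst h
        simp [P2, σ]
      · simp [P2, P1, σ, twin, h, hu])
    (fun u => by
      rw [hP2x]
      by_cases h : u = v
      · subst h
        simp [P1, σ]
      · simp [P1, σ, twin, h])
    (fun u w' => by
      rw [hP2x]
      by_cases h0 : DV.x u w' = DV.x v w
      · left
        injection h0 with h1 h2
        subst h1 h2
        simp [P1]
      · rw [hP1, Function.update_of_ne h0]
        by_cases h : w' = πB u <;> simp [twin, h])
    (fun u w' => by simp [P2, P1, twin])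
  have y2 := hD2.2.2 v (πB v) hpE
  have z2 := hD2.2.1 (DV.z v (πB v)) hpE
  have x2 := hD2.2.1 (DV.x v (πB v)) hpE
  rw [show P2 (DV.x v (πB v)) = DV.y v (πB v) by
    rw [hP2x, hP1, Function.update_of_ne (fun h => hne (by injection h with _ h; exact h.symm))]
    simp [twin]] at x2
  rw [show P2 (DV.z v (πB v)) = DV.base (πB v) by simp [P2, P1, twin]] at z2
  simp only [rD, if_true, zero_add] at x2 z2
  have hz2 : zD n p P2 (twin πB (DV.base v)) (DV.base v) =
      p v * (rB n v w + BVal n πB w - BVal n πB v) := by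
    rw [htb]
    simp only [zD, rD]
    rw [x2, y2, z2, hb2 v hvV, hb2 _ hσV, bp, bv, bv0]
    ring
  exact ⟨hz0.trans hz1.symm, hz1.trans hz2.symm⟩
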